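/- Let S be the homomorphism of the Fibonacci language L_F with S(0) = 3 and S(1) = 2, and let Φ = (1+√5)/2. Then S(L_F) = {⌊nΦ²⌋ : n ≥ 1} ∪ {⌊nΦ²⌋ + 1 : n ≥ 1}. -/

import Mathlib

/-- `w` is a nonempty finite factor of the infinite word `f`. -/
def IsFactor {A : Type*} (f : ℕ → A) (w : List A) : Prop :=
  w ≠ [] ∧ ∃ i : ℕ, w = (List.range w.length).map fun j => f (i + j)

/-- The golden mean `Φ = (1+√5)/2`. -/
noncomputable def Phi : ℝ := (1 + Real.sqrt 5) / 2

/-- The Fibonacci word `c(n) = ⌊(n+2)α⌋ − ⌊(n+1)α⌋` with `α = 2 − Φ`. -/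
noncomputable def fibWord (n : ℕ) : ℤ :=
  ⌊((n : ℝ) + 2) * (2 - Phi)⌋ - ⌊((n : ℝ) + 1) * (2 - Phi)⌋

/-- The infinite word `0c`: the Fibonacci word prefixed by `0`. -/
noncomputable def fibWord0 (n : ℕ) : ℤ :=
  if n = 0 then 0 else fibWord (n - 1)

/-- The infinite word `1c`: the Fibonacci word prefixed by `1`. -/
noncomputable def fibWord1 (n : ℕ) : ℤ :=
  if n = 0 then 1 else fibWord (n - 1)

/-- The Fibonacci language: nonempty finite factors of `0c` or of `1c`. -/
def fibLang : Set (List ℤ) :=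
  {w | IsFactor fibWord0 w ∨ IsFactor fibWord1 w}

/-- The homomorphism determined by `S0 = S(0)`, `S1 = S(1)`:
`S(w) = N_0(w)·S0 + N_1(w)·S1`. -/
def wordVal01 (S0 S1 : ℕ) (w : List ℤ) : ℕ :=
  w.count 0 * S0 + w.count 1 * S1

/-!
Put `α = 2 - Φ`. The words `0c` and `1c` are the differences of the sequences `⌊nα⌋` and `⌈nα⌉`,
so the letters of a factor of length `n` telescope to a difference of two terms at distance `n`,
which is `⌊nα⌋` or `⌈nα⌉`; the prefixes of length `n` attain both. Over the letters `0` and `1`,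
`S(w)` is an affine function of the length and the letter sum, here `3n - ∑ w`. As `Φ² = 3 - α`,
the two possible values are `3n - ⌈nα⌉ = ⌊nΦ²⌋` and `3n - ⌊nα⌋ = ⌊nΦ²⌋ + 1`.
-/

section Floor

variable {R : Type*} [Ring R] [LinearOrder R] [IsStrictOrderedRing R] [FloorRing R]

lemma floor_add_sub_floor_eq_floor_or_ceil (a b : R) :
    ⌊a + b⌋ - ⌊a⌋ = ⌊b⌋ ∨ ⌊a + b⌋ - ⌊a⌋ = ⌈b⌉ := by
  have lower : ⌊a⌋ + ⌊b⌋ ≤ ⌊a + b⌋ := Int.le_floor_add a b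
  have upper : ⌊a + b⌋ ≤ ⌊a⌋ + ⌈b⌉ := by
    rw [← Int.floor_add_intCast]
    gcongr
    exact Int.le_ceil b
  have := Int.ceil_le_floor_add_one b
  omega

lemma ceil_add_sub_ceil_eq_floor_or_ceil (a b : R) :
    ⌈a + b⌉ - ⌈a⌉ = ⌊b⌋ ∨ ⌈a + b⌉ - ⌈a⌉ = ⌈b⌉ := by
  have h := floor_add_sub_floor_eq_floor_or_ceil (-a) (-b)
  rw [← neg_add, Int.floor_neg, Int.floor_neg, Int.floor_neg, Int.ceil_neg] at h
  omega

end Floor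

lemma ceil_natCast_mul_of_irrational {α : ℝ} (hα : Irrational α) {n : ℕ} (hn : n ≠ 0) :
    ⌈(n : ℝ) * α⌉ = ⌊(n : ℝ) * α⌋ + 1 := by
  rw [Int.ceil_eq_floor_add_one_iff_notMem]
  rintro ⟨z, hz⟩
  exact (hα.natCast_mul hn).ne_int z hz.symm

lemma IsFactor.exists_eq_of_mem {A : Type*} {f : ℕ → A} {w : List A} (hw : IsFactor f w) {x : A}
    (hx : x ∈ w) : ∃ k, f k = x := by
  obtain ⟨-, i, hi⟩ := hw
  rw [hi, List.mem_map] at hx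
  obtain ⟨j, -, hj⟩ := hx
  exact ⟨i + j, hj⟩

lemma isFactor_map_range {A : Type*} (f : ℕ → A) (i : ℕ) {n : ℕ} (hn : n ≠ 0) :
    IsFactor f ((List.range n).map fun j => f (i + j)) :=
  ⟨by simpa using hn, i, by simp⟩

lemma exists_isFactor_diff_length_sum_iff {G : Type*} [AddCommGroup G] (g : ℕ → G) (n : ℕ) (s : G) :
    (∃ w, IsFactor (fun k => g (k + 1) - g k) w ∧ w.length = n ∧ w.sum = s) ↔
      n ≠ 0 ∧ ∃ i, g (i + n) - g i = s := by
  have telescope (i n : ℕ) :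
      ((List.range n).map fun j => g (i + j + 1) - g (i + j)).sum = g (i + n) - g i :=
    Finset.sum_range_sub (fun j => g (i + j)) n
  constructor
  · rintro ⟨w, ⟨hne, i, hi⟩, rfl, rfl⟩
    refine ⟨by simpa using hne, i, ?_⟩
    rw [← telescope, ← hi]
  · rintro ⟨hn, i, rfl⟩
    exact ⟨_, isFactor_map_range _ i hn, by simp, telescope i n⟩

lemma wordVal01_eq_length_add_sum (S0 S1 : ℕ) {w : List ℤ} (hw : ∀ x ∈ w, x = 0 ∨ x = 1) :
    (wordVal01 S0 S1 w : ℤ) = S0 * w.length + (S1 - S0) * w.sum := by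
  induction w with
  | nil => simp [wordVal01]
  | cons x w ih =>
    rw [List.forall_mem_cons] at hw
    have ih := ih hw.2
    simp only [wordVal01] at ih ⊢
    push_cast at ih
    rcases hw.1 with rfl | rfl
    · rw [List.count_cons_self, List.count_cons_of_ne zero_ne_one, List.length_cons, List.sum_cons]
      push_cast
      linarith
    · rw [List.count_cons_self, List.count_cons_of_ne one_ne_zero, List.length_cons, List.sum_cons]
      push_cast
      linarith

/-- The lower mechanical word of slope `α` and intercept `0`; `0c` at `α = 2 - Φ`. -/
noncomputable def lowerMechanicalWord (α : ℝ) (n : ℕ) : ℤ :=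
  ⌊((n + 1 : ℕ) : ℝ) * α⌋ - ⌊(n : ℝ) * α⌋

/-- The upper mechanical word of slope `α` and intercept `0`; `1c` at `α = 2 - Φ`. -/
noncomputable def upperMechanicalWord (α : ℝ) (n : ℕ) : ℤ :=
  ⌈((n + 1 : ℕ) : ℝ) * α⌉ - ⌈(n : ℝ) * α⌉

/-- The language of slope `α`: the nonempty finite factors of the two mechanical words with
intercept `0`. At `α = 2 - Φ` it is the Fibonacci language. -/
def mechanicalLang (α : ℝ) : Set (List ℤ) :=
  {w | IsFactor (lowerMechanicalWord α) w ∨ IsFactor (upperMechanicalWord α) w}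

section Mechanical

variable {α : ℝ}

lemma upperMechanicalWord_eq_lowerMechanicalWord (hα : Irrational α) {n : ℕ} (hn : n ≠ 0) :
    upperMechanicalWord α n = lowerMechanicalWord α n := by
  rw [upperMechanicalWord, lowerMechanicalWord, ceil_natCast_mul_of_irrational hα hn,
    ceil_natCast_mul_of_irrational hα n.succ_ne_zero]
  ring

lemma exists_mem_mechanicalLang_length_sum_iff (n : ℕ) (s : ℤ) :
    (∃ w ∈ mechanicalLang α, w.length = n ∧ w.sum = s) ↔
      n ≠ 0 ∧ (s = ⌊(n : ℝ) * α⌋ ∨ s = ⌈(n : ℝ) * α⌉) := by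
  have lower := exists_isFactor_diff_length_sum_iff (fun k : ℕ => ⌊(k : ℝ) * α⌋) n s
  have upper := exists_isFactor_diff_length_sum_iff (fun k : ℕ => ⌈(k : ℝ) * α⌉) n s
  constructor
  · rintro ⟨w, hw | hw, hlen, hsum⟩
    · obtain ⟨hn, i, rfl⟩ := lower.1 ⟨w, hw, hlen, hsum⟩
      rw [Nat.cast_add, add_mul]
      exact ⟨hn, floor_add_sub_floor_eq_floor_or_ceil _ _⟩
    · obtain ⟨hn, i, rfl⟩ := upper.1 ⟨w, hw, hlen, hsum⟩
      rw [Nat.cast_add, add_mul]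
      exact ⟨hn, ceil_add_sub_ceil_eq_floor_or_ceil _ _⟩
  · rintro ⟨hn, rfl | rfl⟩
    · obtain ⟨w, hw, hws⟩ := lower.2 ⟨hn, 0, by simp⟩
      exact ⟨w, Or.inl hw, hws⟩
    · obtain ⟨w, hw, hws⟩ := upper.2 ⟨hn, 0, by simp⟩
      exact ⟨w, Or.inr hw, hws⟩

lemma eq_zero_or_one_of_mem_mechanicalLang (hα : α ∈ Set.Icc 0 1) {w : List ℤ}
    (hw : w ∈ mechanicalLang α) {x : ℤ} (hx : x ∈ w) : x = 0 ∨ x = 1 := by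
  have floor_nonneg : 0 ≤ ⌊α⌋ := Int.floor_nonneg.2 hα.1
  have ceil_le_one : ⌈α⌉ ≤ 1 := Int.ceil_le.2 (by simpa using hα.2)
  have floor_le_ceil := Int.floor_le_ceil α
  rcases hw with hw | hw <;> obtain ⟨k, rfl⟩ := hw.exists_eq_of_mem hx
  · have h := floor_add_sub_floor_eq_floor_or_ceil ((k : ℝ) * α) α
    rw [lowerMechanicalWord, Nat.cast_succ, add_one_mul]
    omega
  · have h := ceil_add_sub_ceil_eq_floor_or_ceil ((k : ℝ) * α) α
    rw [upperMechanicalWord, Nat.cast_succ, add_one_mul]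
    omega

theorem exists_mem_mechanicalLang_wordVal01_eq_iff (hα : α ∈ Set.Icc 0 1) (S0 S1 m : ℕ) :
    (∃ w ∈ mechanicalLang α, wordVal01 S0 S1 w = m) ↔
      ∃ n : ℕ, 1 ≤ n ∧ ((m : ℤ) = S0 * n + (S1 - S0) * ⌊(n : ℝ) * α⌋ ∨
        (m : ℤ) = S0 * n + (S1 - S0) * ⌈(n : ℝ) * α⌉) := by
  have value {w : List ℤ} (hw : w ∈ mechanicalLang α) :
      (wordVal01 S0 S1 w : ℤ) = S0 * w.length + (S1 - S0) * w.sum :=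
    wordVal01_eq_length_add_sum S0 S1 fun _ => eq_zero_or_one_of_mem_mechanicalLang hα hw
  constructor
  · rintro ⟨w, hw, rfl⟩
    obtain ⟨hn, hsum⟩ := (exists_mem_mechanicalLang_length_sum_iff _ _).1 ⟨w, hw, rfl, rfl⟩
    rw [value hw]
    exact ⟨w.length, Nat.one_le_iff_ne_zero.2 hn, hsum.imp (by rw [·]) (by rw [·])⟩
  · rintro ⟨n, hn, hm⟩
    obtain ⟨s, hs, hms⟩ : ∃ s, (s = ⌊(n : ℝ) * α⌋ ∨ s = ⌈(n : ℝ) * α⌉) ∧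
        (m : ℤ) = S0 * n + (S1 - S0) * s :=
      hm.elim (fun h => ⟨_, Or.inl rfl, h⟩) (fun h => ⟨_, Or.inr rfl, h⟩)
    obtain ⟨w, hw, rfl, rfl⟩ :=
      (exists_mem_mechanicalLang_length_sum_iff n s).2 ⟨Nat.one_le_iff_ne_zero.1 hn, hs⟩
    exact ⟨w, hw, by exact_mod_cast (value hw).trans hms.symm⟩

end Mechanical

lemma irrational_two_sub_phi : Irrational (2 - Phi) :=
  Real.goldenRatio_irrational.natCast_sub 2

lemma two_sub_phi_mem_Ioo : 2 - Phi ∈ Set.Ioo 0 1 := by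
  have one_lt : 1 < Phi := Real.one_lt_goldenRatio
  have lt_two : Phi < 2 := Real.goldenRatio_lt_two
  constructor <;> linarith

lemma fibWord_eq_lowerMechanicalWord (n : ℕ) :
    fibWord n = lowerMechanicalWord (2 - Phi) (n + 1) := by
  rw [fibWord, lowerMechanicalWord, Nat.cast_succ, Nat.cast_succ, add_assoc, one_add_one_eq_two]

lemma fibWord0_eq_lowerMechanicalWord : fibWord0 = lowerMechanicalWord (2 - Phi) := by
  funext n
  cases n with
  | zero =>
    have floor_eq_zero : ⌊2 - Phi⌋ = 0 :=
      Int.floor_eq_zero_iff.2 (Set.Ioo_subset_Ico_self two_sub_phi_mem_Ioo)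
    simp [fibWord0, lowerMechanicalWord, floor_eq_zero]
  | succ n => exact fibWord_eq_lowerMechanicalWord n

lemma fibWord1_eq_upperMechanicalWord : fibWord1 = upperMechanicalWord (2 - Phi) := by
  funext n
  cases n with
  | zero =>
    have ceil_eq_one : ⌈2 - Phi⌉ = 1 :=
      Int.ceil_eq_iff.2 (by simpa using Set.Ioo_subset_Ioc_self two_sub_phi_mem_Ioo)
    simp [fibWord1, upperMechanicalWord, ceil_eq_one]
  | succ n =>
    rw [upperMechanicalWord_eq_lowerMechanicalWord irrational_two_sub_phi n.succ_ne_zero]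
    exact fibWord_eq_lowerMechanicalWord n

lemma fibLang_eq_mechanicalLang : fibLang = mechanicalLang (2 - Phi) := by
  rw [fibLang, mechanicalLang, fibWord0_eq_lowerMechanicalWord, fibWord1_eq_upperMechanicalWord]

lemma floor_natCast_mul_phi_sq (n : ℕ) :
    ⌊(n : ℝ) * Phi ^ 2⌋ = 3 * n - ⌈(n : ℝ) * (2 - Phi)⌉ := by
  have phi_sq : Phi ^ 2 = Phi + 1 := Real.goldenRatio_sq
  have eq_sub : (n : ℝ) * Phi ^ 2 = ((3 * n : ℤ) : ℝ) + -((n : ℝ) * (2 - Phi)) := by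
    rw [phi_sq]
    push_cast
    ring
  rw [eq_sub, Int.floor_intCast_add, Int.floor_neg, ← sub_eq_add_neg]

theorem fib_image_three_two :
    {m : ℕ | ∃ w ∈ fibLang, wordVal01 3 2 w = m} =
      {m : ℕ | ∃ n : ℕ, 1 ≤ n ∧
        ((m : ℤ) = ⌊(n : ℝ) * Phi ^ 2⌋ ∨ (m : ℤ) = ⌊(n : ℝ) * Phi ^ 2⌋ + 1)} := by
  ext m
  simp only [Set.mem_ofPred_eq]
  rw [fibLang_eq_mechanicalLang, exists_mem_mechanicalLang_wordVal01_eq_iff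
    (Set.Ioo_subset_Icc_self two_sub_phi_mem_Ioo)]
  refine exists_congr fun n => and_congr_right fun hn => ?_
  have hceil := ceil_natCast_mul_of_irrational irrational_two_sub_phi (Nat.one_le_iff_ne_zero.1 hn)
  rw [floor_natCast_mul_phi_sq, hceil]
  push_cast
  omega
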